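/- For every n ≥ 1 and σ ∈ (0,2) there exist constants c₁, c₂, c > 0 such that for all w ∈ ℝ^n: (i) c₁ (1+|w|²)^{−(n+σ)/2} ≤ Ψ_n(w) ≤ c₂ (1+|w|²)^{−(n+σ)/2}; (ii) |LΨ_n(w)| ≤ c (1+|w|²)^{−(n+σ)/2}; (iii) |∇Ψ_n(w)| ≤ c (1+|w|²)^{−(n+σ+1)/2}; (iv) |∇(LΨ_n)(w)| ≤ c (1+|w|²)^{−(n+σ+1)/2}. -/

import Mathlib

open MeasureTheory Metric Real Set
open scoped InnerProductSpace ENNReal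

noncomputable section

/-- `ℝ^n` as a Euclidean space. -/
abbrev Eu (n : ℕ) := EuclideanSpace ℝ (Fin n)

/-- The heat-kernel profile `Ψ_n` of the fractional Laplacian `(−Δ)^{σ/2}` in `ℝ^n`:
`Ψ_n(w) = (2π)^{−n} ∫_{ℝ^n} e^{−|ξ|^σ} e^{i w·ξ} dξ`. -/
def Psi (n : ℕ) (σ : ℝ) (w : Eu n) : ℝ :=
  (2 * π) ^ (-(n : ℝ)) *
    (∫ ξ : Eu n, ((Real.exp (-‖ξ‖ ^ σ) : ℝ) : ℂ) *
      Complex.exp (Complex.I * (⟪w, ξ⟫_ℝ : ℂ))).re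

/-- `LΨ_n`, the inverse Fourier transform of `|ξ|^σ e^{−|ξ|^σ}`. -/
def LPsi (n : ℕ) (σ : ℝ) (w : Eu n) : ℝ :=
  (2 * π) ^ (-(n : ℝ)) *
    (∫ ξ : Eu n, ((‖ξ‖ ^ σ * Real.exp (-‖ξ‖ ^ σ) : ℝ) : ℂ) *
      Complex.exp (Complex.I * (⟪w, ξ⟫_ℝ : ℂ))).re

/-- `ℝ^N = ℝ^{n₁} × ⋯ × ℝ^{n_M}` (with the Euclidean norm), `N = n₁ + ⋯ + n_M`. -/
abbrev XSp {M : ℕ} (n : Fin M → ℕ) := PiLp 2 (fun k => Eu (n k))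

/-- The heat-kernel profile `Φ(x) = ∏_k Ψ_{n_k}(x^k)` of `𝓛 = Σ_k (−Δ_{x^k})^{σ/2}`. -/
def PhiProd {M : ℕ} (n : Fin M → ℕ) (σ : ℝ) (x : XSp n) : ℝ :=
  ∏ k, Psi (n k) σ (x k)

/-- `𝓛Φ(x) = Σ_k (LΨ_{n_k})(x^k) ∏_{i≠k} Ψ_{n_i}(x^i)`. -/
def LPhiProd {M : ℕ} (n : Fin M → ℕ) (σ : ℝ) (x : XSp n) : ℝ :=
  ∑ k, LPsi (n k) σ (x k) * ∏ i ∈ Finset.univ.erase k, Psi (n i) σ (x i)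

/-!
`e^{-l^α}` with `α = σ/2` is the Laplace transform of a law `μ` on the positive half-line, the
`α`-stable law: by the binomial series `1 - (1 - x)^α` is the generating function of the Sibuya
distribution, and `e^{-l^α}` is the limit of the Laplace transforms of normalised sums of
independent Sibuya variables. Writing `e^{-|ξ|^σ} = ∫ e^{-s|ξ|²} dμ(s)` and taking Fourier
transforms, `Ψ_n(w)` becomes a mixture of Gaussians, a constant times `G_k(|w|²/4)` with
`G_k(a) = ∫ s^{-k} e^{-a/s} dμ(s)` and `k = n/2`.

Comparing `s^{-k} e^{-a/s}` with combinations of the functions `1 - e^{-ls}`, whose integrals are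
`1 - e^{-l^α}`, shows that `G_k(a)` is of order `a^{-(k+α)}` at infinity. A gradient in `w` turns
`G_k` into `-w G_{k+1} / 2`, hence gains one half power of `1 + |w|²`. Finally Euler's identity for
`e^{-r^σ|ξ|^σ} = e^{-|rξ|^σ}` expresses `LΨ_n` through `Ψ_n` and `w · ∇Ψ_n`.
-/

open Filter Topology

/-- `φ` is the Laplace transform of a probability law on `[0, ∞]`, as a function on `(0, ∞)`.
The law is encoded by its image `ν` under `s ↦ e^{-s}`, so that `φ l` is the moment of order `l`
of `ν`: on the compact unit interval every sequence of laws has a cluster point. -/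
def IsLaplaceTransform (φ : ℝ → ℝ) : Prop :=
  ∃ ν : ProbabilityMeasure unitInterval, ∀ l : ℝ, 0 < l →
    ∫ x : unitInterval, (x : ℝ) ^ l ∂(ν : Measure unitInterval) = φ l

lemma continuous_unitInterval_rpow {l : ℝ} (hl : 0 ≤ l) :
    Continuous (fun x : unitInterval => (x : ℝ) ^ l) :=
  continuous_subtype_val.rpow_const fun _ => Or.inr hl

lemma integrable_unitInterval_rpow {l : ℝ} (hl : 0 ≤ l) (ν : Measure unitInterval)
    [IsFiniteMeasure ν] : Integrable (fun x : unitInterval => (x : ℝ) ^ l) ν := by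
  refine Integrable.of_bound (C := 1) (continuous_unitInterval_rpow hl).aestronglyMeasurable ?_
  filter_upwards with x
  rw [Real.norm_of_nonneg (Real.rpow_nonneg x.2.1 _)]
  exact Real.rpow_le_one x.2.1 x.2.2 hl

namespace IsLaplaceTransform

variable {φ ψ : ℝ → ℝ}

lemma one : IsLaplaceTransform fun _ => 1 :=
  ⟨⟨Measure.dirac 1, inferInstance⟩, fun l _ => by simp⟩

lemma mul (hφ : IsLaplaceTransform φ) (hψ : IsLaplaceTransform ψ) :
    IsLaplaceTransform fun l => φ l * ψ l := by
  obtain ⟨μ, hμ⟩ := hφ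
  obtain ⟨ν, hν⟩ := hψ
  have hm : Measurable fun p : unitInterval × unitInterval => p.1 * p.2 := by fun_prop
  refine ⟨(μ.prod ν).map hm.aemeasurable, fun l hl => ?_⟩
  beta_reduce
  rw [ProbabilityMeasure.toMeasure_map, ProbabilityMeasure.toMeasure_prod,
    integral_map hm.aemeasurable (continuous_unitInterval_rpow hl.le).aestronglyMeasurable,
    ← hμ l hl, ← hν l hl,
    ← integral_prod_mul (fun x : unitInterval => (x : ℝ) ^ l) fun x : unitInterval => (x : ℝ) ^ l]
  simp only [Icc.coe_mul, Real.mul_rpow, unitInterval.nonneg]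

lemma pow (hφ : IsLaplaceTransform φ) (N : ℕ) : IsLaplaceTransform fun l => φ l ^ N := by
  induction N with
  | zero => simpa only [pow_zero] using one
  | succ N ih => simpa only [pow_succ] using ih.mul hφ

lemma comp_const_mul (hφ : IsLaplaceTransform φ) {c : ℝ} (hc : 0 < c) :
    IsLaplaceTransform fun l => φ (c * l) := by
  obtain ⟨ν, hν⟩ := hφ
  have hm : Measurable fun x : unitInterval =>
      (⟨(x : ℝ) ^ c, Real.rpow_nonneg (unitInterval.nonneg x) c,
        Real.rpow_le_one (unitInterval.nonneg x) (unitInterval.le_one x) hc.le⟩ : unitInterval) :=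
    (continuous_unitInterval_rpow hc.le).measurable.subtype_mk
  refine ⟨ν.map hm.aemeasurable, fun l hl => ?_⟩
  beta_reduce
  rw [ProbabilityMeasure.toMeasure_map,
    integral_map hm.aemeasurable (continuous_unitInterval_rpow hl.le).aestronglyMeasurable,
    ← hν (c * l) (by positivity)]
  simp only [Real.rpow_mul, unitInterval.nonneg]

lemma of_tendsto {Φ : ℕ → ℝ → ℝ} (hΦ : ∀ᶠ N in atTop, IsLaplaceTransform (Φ N))
    (hlim : ∀ l, 0 < l → Tendsto (Φ · l) atTop (𝓝 (φ l))) : IsLaplaceTransform φ := by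
  obtain ⟨N₀, hN₀⟩ := eventually_atTop.1 hΦ
  choose ν hν using fun N => hN₀ (N + N₀) (Nat.le_add_left N₀ N)
  obtain ⟨ν₀, -, hν₀⟩ := isCompact_univ.ultrafilter_le_nhds ((hyperfilter ℕ).map ν) (by simp)
  refine ⟨ν₀, fun l hl => ?_⟩
  have hmoment := (ProbabilityMeasure.tendsto_iff_forall_integral_tendsto.1
    (show Tendsto ν (hyperfilter ℕ) (𝓝 ν₀) from hν₀))
    (BoundedContinuousFunction.mkOfCompact ⟨_, continuous_unitInterval_rpow hl.le⟩)
  refine tendsto_nhds_unique hmoment (Tendsto.mono_left ?_ Nat.hyperfilter_le_atTop)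
  exact ((hlim l hl).comp (tendsto_add_atTop_nat N₀)).congr fun N => (hν N l hl).symm

lemma of_hasSum {p x : ℕ → ℝ} (hp : ∀ k, 0 ≤ p k) (hsum : HasSum p 1) (hx : ∀ k, 0 ≤ x k) :
    IsLaplaceTransform fun l => ∑' k, p k * exp (-(x k * l)) := by
  have hmass : HasSum (fun k => ENNReal.ofReal (p k)) 1 := by
    rw [← ENNReal.ofReal_one, ← hsum.tsum_eq, ENNReal.ofReal_tsum_of_nonneg hp hsum.summable]
    exact ENNReal.summable.hasSum
  let P : PMF ℕ := ⟨fun k => ENNReal.ofReal (p k), hmass⟩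
  let e : ℕ → unitInterval := fun k => ⟨exp (-x k), by positivity, by simpa using hx k⟩
  have he : Measurable e := .of_discrete
  refine ⟨⟨P.toMeasure.map e, Measure.isProbabilityMeasure_map he.aemeasurable⟩,
    fun l hl => ?_⟩
  have hcont := continuous_unitInterval_rpow hl.le
  rw [ProbabilityMeasure.coe_mk,
    integral_map he.aemeasurable hcont.aestronglyMeasurable, PMF.integral_eq_tsum]
  · refine tsum_congr fun k => ?_
    rw [← neg_mul, Real.exp_mul, smul_eq_mul]
    exact congrArg (· * _) (ENNReal.toReal_ofReal (hp k))
  · exact (integrable_unitInterval_rpow hl.le (P.toMeasure.map e)).comp_measurable he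

end IsLaplaceTransform

/-- The weight `(-1)^k \binom{α}{k+1}` at `k + 1` of the Sibuya law with parameter `α`, whose
generating function is `1 - (1 - z)^α`. -/
def sibuyaWeight (α : ℝ) (k : ℕ) : ℝ := (-1) ^ k * Ring.choose α (k + 1)

lemma succ_mul_choose_succ (α : ℝ) (k : ℕ) :
    (k + 1) * Ring.choose α (k + 1) = (α - k) * Ring.choose α k := by
  have h := Ring.choose_smul_choose α (Nat.le_add_right k 1)
  rw [Nat.choose_symm_add, Nat.choose_one_right, Nat.add_sub_cancel_left, Ring.choose_one_right,
    nsmul_eq_mul] at h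
  push_cast at h
  rw [h, mul_comm]

lemma sibuyaWeight_nonneg {α : ℝ} (hα0 : 0 ≤ α) (hα1 : α ≤ 1) (k : ℕ) : 0 ≤ sibuyaWeight α k := by
  induction k with
  | zero => simpa [sibuyaWeight] using hα0
  | succ k ih =>
    have hrec : (k + 2) * sibuyaWeight α (k + 1) = (k + 1 - α) * sibuyaWeight α k := by
      have h := succ_mul_choose_succ α (k + 1)
      push_cast at h
      simp only [sibuyaWeight, pow_succ]
      linear_combination -(-1) ^ k * h
    refine nonneg_of_mul_nonneg_right (hrec ▸ mul_nonneg ?_ ih) (by positivity)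
    linarith [k.cast_nonneg (α := ℝ)]

lemma hasSum_sibuyaWeight_mul_pow (α : ℝ) {z : ℝ} (hz : |z| < 1) :
    HasSum (fun k => sibuyaWeight α k * z ^ (k + 1)) (1 - (1 - z) ^ α) := by
  have hball : -z ∈ eball (0 : ℝ) 1 := by
    simpa [Metric.mem_eball, edist_dist] using hz
  have h := (Real.one_add_rpow_hasFPowerSeriesOnBall_zero (a := α)).hasSum hball
  simp only [binomialSeries_apply, zero_add] at h
  have h' := ((hasSum_nat_add_iff' 1).2 h).neg
  simp only [List.ofFn_const, List.prod_replicate, Finset.sum_range_one, Ring.choose_zero_right,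
    pow_zero, smul_eq_mul, mul_one, neg_sub, ← sub_eq_add_neg] at h'
  refine h'.congr_fun fun k => ?_
  rw [sibuyaWeight, neg_pow z, pow_succ (-1)]
  ring

lemma sum_range_sibuyaWeight_le_one {α : ℝ} (hα0 : 0 ≤ α) (hα1 : α ≤ 1) (N : ℕ) :
    ∑ k ∈ Finset.range N, sibuyaWeight α k ≤ 1 := by
  have hlim : Tendsto (fun z : ℝ => ∑ k ∈ Finset.range N, sibuyaWeight α k * z ^ (k + 1))
      (𝓝[<] 1) (𝓝 (∑ k ∈ Finset.range N, sibuyaWeight α k)) := by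
    have : Continuous fun z : ℝ => ∑ k ∈ Finset.range N, sibuyaWeight α k * z ^ (k + 1) := by
      fun_prop
    simpa using (this.tendsto 1).mono_left nhdsWithin_le_nhds
  refine le_of_tendsto hlim ?_
  filter_upwards [Ioo_mem_nhdsLT (zero_lt_one' ℝ)] with z hz
  calc ∑ k ∈ Finset.range N, sibuyaWeight α k * z ^ (k + 1)
      ≤ 1 - (1 - z) ^ α := sum_le_hasSum _
        (fun k _ => mul_nonneg (sibuyaWeight_nonneg hα0 hα1 k) (pow_nonneg hz.1.le _))
        (hasSum_sibuyaWeight_mul_pow α (abs_lt.2 ⟨by linarith [hz.1], hz.2⟩))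
    _ ≤ 1 := sub_le_self _ (Real.rpow_nonneg (by linarith [hz.2]) _)

lemma hasSum_sibuyaWeight {α : ℝ} (hα0 : 0 < α) (hα1 : α ≤ 1) : HasSum (sibuyaWeight α) 1 := by
  have hnonneg := sibuyaWeight_nonneg hα0.le hα1
  have hsum : Summable (sibuyaWeight α) :=
    summable_of_sum_range_le hnonneg (sum_range_sibuyaWeight_le_one hα0.le hα1)
  have hz : ∀ᶠ z : ℝ in 𝓝[<] 1, z ∈ Ioo 0 1 := Ioo_mem_nhdsLT zero_lt_one
  have habel : Tendsto (fun z : ℝ => ∑' k, sibuyaWeight α k * z ^ (k + 1)) (𝓝[<] 1)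
      (𝓝 (∑' k, sibuyaWeight α k)) := by
    refine tendsto_tsum_of_dominated_convergence hsum (fun k => ?_) ?_
    · have : Continuous fun z : ℝ => sibuyaWeight α k * z ^ (k + 1) := by fun_prop
      simpa using (this.tendsto 1).mono_left nhdsWithin_le_nhds
    · filter_upwards [hz] with z hz k
      rw [Real.norm_of_nonneg (mul_nonneg (hnonneg k) (pow_nonneg hz.1.le _))]
      exact mul_le_of_le_one_right (hnonneg k) (pow_le_one₀ hz.1.le hz.2.le)
  have hone : Tendsto (fun z : ℝ => 1 - (1 - z) ^ α) (𝓝[<] 1) (𝓝 1) := by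
    have : Continuous fun z : ℝ => 1 - (1 - z) ^ α :=
      continuous_const.sub ((continuous_const.sub continuous_id).rpow_const
        fun _ => Or.inr hα0.le)
    simpa [Real.zero_rpow hα0.ne'] using (this.tendsto 1).mono_left nhdsWithin_le_nhds
  have heq := tendsto_nhds_unique (habel.congr' ?_) hone
  · exact heq ▸ hsum.hasSum
  · filter_upwards [hz] with z hz
    exact (hasSum_sibuyaWeight_mul_pow α (abs_lt.2 ⟨by linarith [hz.1], hz.2⟩)).tsum_eq

lemma isLaplaceTransform_sibuya {α : ℝ} (hα0 : 0 < α) (hα1 : α ≤ 1) :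
    IsLaplaceTransform fun l => ∑' k, sibuyaWeight α k * exp (-((k + 1) * l)) :=
  .of_hasSum (sibuyaWeight_nonneg hα0.le hα1) (hasSum_sibuyaWeight hα0 hα1)
    fun k => by positivity

lemma tsum_sibuyaWeight_mul_exp (α : ℝ) {l : ℝ} (hl : 0 < l) :
    ∑' k : ℕ, sibuyaWeight α k * exp (-((k + 1) * l)) = 1 - (1 - exp (-l)) ^ α := by
  have hz : |exp (-l)| < 1 := by rwa [abs_of_pos (exp_pos _), exp_lt_one_iff, neg_lt_zero]
  rw [← (hasSum_sibuyaWeight_mul_pow α hz).tsum_eq]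
  refine tsum_congr fun k => ?_
  rw [← Real.exp_nat_mul]
  push_cast
  ring_nf

lemma ae_ne_zero_of_tendsto_moment {ν : Measure unitInterval} [IsProbabilityMeasure ν]
    (h : Tendsto (fun l : ℝ => ∫ x : unitInterval, (x : ℝ) ^ l ∂ν) (𝓝[>] 0) (𝓝 1)) :
    ∀ᵐ x ∂ν, x ≠ 0 := by
  have hmeas : MeasurableSet ({0}ᶜ : Set unitInterval) := (measurableSet_singleton 0).compl
  have hle : ∀ l : ℝ, 0 < l → ∫ x : unitInterval, (x : ℝ) ^ l ∂ν ≤ ν.real {0}ᶜ := by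
    intro l hl
    rw [← integral_indicator_one hmeas]
    refine integral_mono (integrable_unitInterval_rpow hl.le ν)
      ((integrable_const 1).indicator hmeas) fun x => ?_
    by_cases hx : x = 0
    · simp [hx, Real.zero_rpow hl.ne']
    · simpa [hx] using Real.rpow_le_one x.2.1 x.2.2 hl.le
  have hone : 1 ≤ ν.real {0}ᶜ := le_of_tendsto h (eventually_mem_nhdsWithin.mono hle)
  rw [probReal_compl_eq_one_sub (measurableSet_singleton 0)] at hone
  have hzero : ν.real {0} = 0 := le_antisymm (by linarith) measureReal_nonneg
  exact measure_eq_zero_iff_ae_notMem.1 ((measureReal_eq_zero_iff).1 hzero)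

lemma ae_ne_one_of_tendsto_moment {ν : Measure unitInterval} [IsFiniteMeasure ν]
    (h : Tendsto (fun l : ℝ => ∫ x : unitInterval, (x : ℝ) ^ l ∂ν) atTop (𝓝 0)) :
    ∀ᵐ x ∂ν, x ≠ 1 := by
  have hle : ∀ l : ℝ, 0 ≤ l → ν.real {1} ≤ ∫ x : unitInterval, (x : ℝ) ^ l ∂ν := by
    intro l hl
    rw [← integral_indicator_one (measurableSet_singleton _)]
    refine integral_mono ((integrable_const 1).indicator (measurableSet_singleton _))
      (integrable_unitInterval_rpow hl ν) fun x => ?_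
    by_cases hx : x = 1
    · simp [hx]
    · simpa [hx] using Real.rpow_nonneg x.2.1 l
  have hzero : ν.real {1} = 0 :=
    le_antisymm (ge_of_tendsto h ((eventually_ge_atTop 0).mono hle)) measureReal_nonneg
  exact measure_eq_zero_iff_ae_notMem.1 ((measureReal_eq_zero_iff).1 hzero)

lemma IsLaplaceTransform.exists_measure {φ : ℝ → ℝ} (hφ : IsLaplaceTransform φ)
    (hzero : Tendsto φ (𝓝[>] 0) (𝓝 1)) (htop : Tendsto φ atTop (𝓝 0)) :
    ∃ μ : Measure ℝ, IsProbabilityMeasure μ ∧ (∀ᵐ s ∂μ, 0 < s) ∧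
      ∀ l : ℝ, 0 < l → ∫ s, exp (-(l * s)) ∂μ = φ l := by
  obtain ⟨ν, hν⟩ := hφ
  have hne0 : ∀ᵐ x ∂(ν : Measure unitInterval), x ≠ 0 := ae_ne_zero_of_tendsto_moment <|
    hzero.congr' <| eventually_mem_nhdsWithin.mono fun l hl => (hν l hl).symm
  have hne1 : ∀ᵐ x ∂(ν : Measure unitInterval), x ≠ 1 := ae_ne_one_of_tendsto_moment <|
    htop.congr' <| (eventually_gt_atTop 0).mono fun l hl => (hν l hl).symm
  have hm : Measurable fun x : unitInterval => -Real.log (x : ℝ) :=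
    (Real.measurable_log.comp measurable_subtype_coe).neg
  refine ⟨(ν : Measure unitInterval).map fun x : unitInterval => -Real.log (x : ℝ),
    Measure.isProbabilityMeasure_map hm.aemeasurable, ?_, fun l hl => ?_⟩
  · rw [ae_map_iff hm.aemeasurable measurableSet_Ioi]
    filter_upwards [hne0, hne1] with x hx0 hx1
    exact neg_pos.2 (Real.log_neg (unitInterval.pos_iff_ne_zero.2 hx0)
      (unitInterval.lt_one_iff_ne_one.2 hx1))
  · have hcont : Continuous fun s : ℝ => exp (-(l * s)) := by fun_prop
    rw [integral_map hm.aemeasurable hcont.aestronglyMeasurable, ← hν l hl]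
    refine integral_congr_ae ?_
    filter_upwards [hne0] with x hx0
    rw [Real.rpow_def_of_pos (unitInterval.pos_iff_ne_zero.2 hx0)]
    ring_nf

lemma tendsto_inv_mul_one_sub_exp_neg (l : ℝ) :
    Tendsto (fun c : ℝ => c⁻¹ * (1 - exp (-(c * l)))) (𝓝[>] 0) (𝓝 l) := by
  have hderiv : HasDerivAt (fun c : ℝ => 1 - exp (-(c * l))) l 0 := by
    simpa using (((hasDerivAt_id (0 : ℝ)).mul_const l).neg.exp).const_sub 1
  simpa using hderiv.tendsto_slope_zero_right

lemma tendsto_sibuya_pow {α l : ℝ} (hα : 0 < α) (hl : 0 < l) :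
    Tendsto (fun N : ℕ => (1 - (1 - exp (-((N : ℝ) ^ (-α⁻¹) * l))) ^ α) ^ N) atTop
      (𝓝 (exp (-l ^ α))) := by
  have hscale : Tendsto (fun N : ℕ => (N : ℝ) ^ (-α⁻¹)) atTop (𝓝[>] 0) := by
    refine tendsto_nhdsWithin_iff.2 ⟨(tendsto_rpow_neg_atTop (inv_pos.2 hα)).comp
      tendsto_natCast_atTop_atTop, ?_⟩
    filter_upwards [eventually_gt_atTop 0] with N hN
    exact Real.rpow_pos_of_pos (Nat.cast_pos.2 hN) _
  have hpow := (((tendsto_inv_mul_one_sub_exp_neg l).comp hscale).rpow_const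
    (Or.inr hα.le : l ≠ 0 ∨ 0 ≤ α)).neg
  simp only [sub_eq_add_neg (1 : ℝ) (_ ^ α)]
  refine Real.tendsto_one_add_pow_exp_of_tendsto (hpow.congr' ?_)
  filter_upwards [eventually_gt_atTop 0] with N hN
  have hN' : (0 : ℝ) < N := Nat.cast_pos.2 hN
  have hc : 0 < (N : ℝ) ^ (-α⁻¹) := Real.rpow_pos_of_pos hN' _
  have hexp : exp (-((N : ℝ) ^ (-α⁻¹) * l)) ≤ 1 := exp_le_one_iff.2 (by nlinarith)
  have hcα : ((N : ℝ) ^ (-α⁻¹))⁻¹ ^ α = N := by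
    rw [← Real.rpow_neg hN'.le, neg_neg, ← Real.rpow_mul hN'.le, inv_mul_cancel₀ hα.ne',
      Real.rpow_one]
  rw [Function.comp_apply, Real.mul_rpow (inv_nonneg.2 hc.le) (by linarith), hcα, mul_neg]

lemma isLaplaceTransform_exp_neg_rpow {α : ℝ} (hα0 : 0 < α) (hα1 : α ≤ 1) :
    IsLaplaceTransform fun l => exp (-l ^ α) := by
  refine .of_tendsto (Φ := fun N l =>
    (∑' k : ℕ, sibuyaWeight α k * exp (-((k + 1) * ((N : ℝ) ^ (-α⁻¹) * l)))) ^ N) ?_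
    fun l hl => (tendsto_sibuya_pow hα0 hl).congr' ?_
  · filter_upwards [eventually_gt_atTop 0] with N hN
    exact ((isLaplaceTransform_sibuya hα0 hα1).comp_const_mul
      (Real.rpow_pos_of_pos (Nat.cast_pos.2 hN) _)).pow N
  · filter_upwards [eventually_gt_atTop 0] with N hN
    have hN' : (0 : ℝ) < (N : ℝ) ^ (-α⁻¹) := Real.rpow_pos_of_pos (Nat.cast_pos.2 hN) _
    rw [tsum_sibuyaWeight_mul_exp α (mul_pos hN' hl)]

/-- `μ` is the law at time one of the `α`-stable subordinator: the probability measure on `(0, ∞)`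
with Laplace transform `l ↦ e^{-l^α}`. -/
structure IsStableLaw (α : ℝ) (μ : Measure ℝ) : Prop extends IsProbabilityMeasure μ where
  index_pos : 0 < α
  ae_pos : ∀ᵐ s ∂μ, 0 < s
  integral_exp_neg_mul : ∀ l : ℝ, 0 < l → ∫ s, exp (-(l * s)) ∂μ = exp (-l ^ α)

lemma exists_isStableLaw {α : ℝ} (hα0 : 0 < α) (hα1 : α ≤ 1) : ∃ μ, IsStableLaw α μ := by
  have hcont : Continuous fun l : ℝ => exp (-l ^ α) :=
    Real.continuous_exp.comp (continuous_id.rpow_const fun _ => Or.inr hα0.le).neg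
  have hzero : Tendsto (fun l : ℝ => exp (-l ^ α)) (𝓝[>] 0) (𝓝 1) := by
    simpa [Real.zero_rpow hα0.ne'] using (hcont.tendsto 0).mono_left nhdsWithin_le_nhds
  have htop : Tendsto (fun l : ℝ => exp (-l ^ α)) atTop (𝓝 0) :=
    Real.tendsto_exp_neg_atTop_nhds_zero.comp (tendsto_rpow_atTop hα0)
  obtain ⟨μ, hprob, hpos, hlaplace⟩ :=
    (isLaplaceTransform_exp_neg_rpow hα0 hα1).exists_measure hzero htop
  exact ⟨μ, ⟨hprob, hα0, hpos, hlaplace⟩⟩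

/-- The integral `∫ s^{-k} e^{-a/s} dμ(s)`. For `k = n / 2` and `a = |w|² / 4` it is, up to a
constant, the value at `w` of the mixture over `μ` of the heat kernels of `ℝ^n` at times `s`. -/
def gaussianMixture (μ : Measure ℝ) (k a : ℝ) : ℝ := ∫ s, s ^ (-k) * exp (-(a / s)) ∂μ

lemma gaussianMixture_nonneg {μ : Measure ℝ} (hpos : ∀ᵐ s ∂μ, 0 < s) (k a : ℝ) :
    0 ≤ gaussianMixture μ k a := by
  refine integral_nonneg_of_ae ?_
  filter_upwards [hpos] with s hs
  positivity

lemma integrable_exp_neg_mul {μ : Measure ℝ} [IsFiniteMeasure μ] (hpos : ∀ᵐ s ∂μ, 0 < s) {l : ℝ}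
    (hl : 0 ≤ l) : Integrable (fun s => exp (-(l * s))) μ := by
  have hcont : Continuous fun s : ℝ => exp (-(l * s)) := by fun_prop
  refine Integrable.of_bound (C := 1) hcont.aestronglyMeasurable ?_
  filter_upwards [hpos] with s hs
  rw [Real.norm_of_nonneg (exp_pos _).le, Real.exp_le_one_iff, neg_nonpos]
  positivity

lemma rpow_neg_mul_exp_scale {k a s : ℝ} (ha : 0 < a) (hs : 0 < s) :
    s ^ (-k) * exp (-(a / s)) = a ^ (-k) * ((a⁻¹ * s) ^ (-k) * exp (-(1 / (a⁻¹ * s)))) := by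
  rw [← mul_assoc, ← Real.mul_rpow ha.le (by positivity), mul_inv_cancel_left₀ ha.ne']
  congr 3
  field_simp

namespace IsStableLaw

variable {α : ℝ} {μ : Measure ℝ}

-- `Γ(k) s^{-k} = ∫₀^∞ t^{k-1} e^{-ts} dt` reduces the claim to the Laplace transform of `μ`.
lemma integrable_rpow_neg (hμ : IsStableLaw α μ) {k : ℝ} (hk : 0 < k) :
    Integrable (fun s => s ^ (-k)) μ := by
  have := hμ.toIsProbabilityMeasure
  let F : ℝ × ℝ → ℝ := fun p => p.2 ^ (k - 1) * exp (-(p.1 * p.2))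
  have hF : Measurable F := by fun_prop
  have hFint : Integrable F (μ.prod (volume.restrict (Ioi 0))) := by
    refine (integrable_prod_iff' hF.aestronglyMeasurable).2 ⟨?_, ?_⟩
    · filter_upwards [ae_restrict_mem measurableSet_Ioi] with t ht
      simpa only [F, mul_comm t] using
        (integrable_exp_neg_mul hμ.ae_pos (le_of_lt ht)).const_mul (t ^ (k - 1))
    · have hgamma : IntegrableOn (fun t : ℝ => t ^ (k - 1) * exp (-t ^ α)) (Ioi 0) :=
        integrableOn_rpow_mul_exp_neg_rpow (by linarith) hμ.index_pos
      refine hgamma.congr ?_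
      filter_upwards [ae_restrict_mem measurableSet_Ioi] with t (ht : 0 < t)
      rw [← hμ.integral_exp_neg_mul t ht, ← integral_const_mul]
      refine integral_congr_ae (.of_forall fun s => ?_)
      simp only [F]
      rw [Real.norm_of_nonneg (by positivity), mul_comm t]
  refine (hFint.integral_prod_left.div_const (Gamma k)).congr ?_
  filter_upwards [hμ.ae_pos] with s hs
  simp only [F]
  rw [Real.integral_rpow_mul_exp_neg_mul_Ioi hk hs, mul_div_cancel_right₀ _
    (Real.Gamma_pos_of_pos hk).ne', one_div, Real.inv_rpow hs.le, Real.rpow_neg hs.le]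

lemma integrable_rpow_neg_mul_exp (hμ : IsStableLaw α μ) {k a : ℝ} (hk : 0 < k) (ha : 0 ≤ a) :
    Integrable (fun s => s ^ (-k) * exp (-(a / s))) μ := by
  have hm : Measurable fun s : ℝ => s ^ (-k) * exp (-(a / s)) := by fun_prop
  refine (hμ.integrable_rpow_neg hk).mono' hm.aestronglyMeasurable ?_
  filter_upwards [hμ.ae_pos] with s hs
  rw [Real.norm_of_nonneg (by positivity)]
  exact mul_le_of_le_one_right (by positivity)
    (Real.exp_le_one_iff.2 (neg_nonpos.2 (by positivity)))

lemma antitoneOn_gaussianMixture (hμ : IsStableLaw α μ) {k : ℝ} (hk : 0 < k) :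
    AntitoneOn (gaussianMixture μ k) (Ici 0) := by
  intro a ha b hb hab
  refine integral_mono_ae (hμ.integrable_rpow_neg_mul_exp hk hb)
    (hμ.integrable_rpow_neg_mul_exp hk ha) ?_
  filter_upwards [hμ.ae_pos] with s hs
  gcongr

lemma integrable_one_sub_exp (hμ : IsStableLaw α μ) {l : ℝ} (hl : 0 ≤ l) :
    Integrable (fun s => 1 - exp (-(l * s))) μ :=
  have := hμ.toIsProbabilityMeasure
  (integrable_const _).sub (integrable_exp_neg_mul hμ.ae_pos hl)

lemma integral_one_sub_exp (hμ : IsStableLaw α μ) {l : ℝ} (hl : 0 < l) :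
    ∫ s, (1 - exp (-(l * s))) ∂μ = 1 - exp (-l ^ α) := by
  have := hμ.toIsProbabilityMeasure
  rw [integral_sub (integrable_const _) (integrable_exp_neg_mul hμ.ae_pos hl.le),
    hμ.integral_exp_neg_mul l hl, integral_const, probReal_univ, one_smul]

end IsStableLaw

lemma rpow_le_mul_exp {k b u : ℝ} (hk : 0 < k) (hb : 0 < b) (hu : 0 ≤ u) :
    u ^ k ≤ (k / b) ^ k * exp (b * u) := by
  have hle : u ≤ k / b * exp (b * u / k) := by
    rw [div_mul_eq_mul_div, le_div_iff₀ hb, mul_comm u, ← div_le_iff₀' hk]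
    linarith [Real.add_one_le_exp (b * u / k)]
  calc u ^ k ≤ (k / b * exp (b * u / k)) ^ k := Real.rpow_le_rpow hu hle hk.le
    _ = (k / b) ^ k * exp (b * u) := by
      rw [Real.mul_rpow (by positivity) (exp_pos _).le, ← Real.exp_mul,
        div_mul_cancel₀ _ hk.ne']

lemma one_sub_exp_neg_le (x : ℝ) : 1 - exp (-x) ≤ x := by
  linarith [Real.add_one_le_exp (-x)]

lemma div_one_add_le_one_sub_exp_neg {x : ℝ} (hx : -1 < x) : x / (1 + x) ≤ 1 - exp (-x) := by
  have hx' : 0 < 1 + x := by linarith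
  have hexp : exp (-x) ≤ (1 + x)⁻¹ := by
    rw [Real.exp_neg]
    exact inv_anti₀ hx' (by linarith [Real.add_one_le_exp x])
  have hdiv : x / (1 + x) = 1 - (1 + x)⁻¹ := by field_simp; ring
  linarith

lemma rpow_neg_mul_exp_le_one_sub_exp {k t : ℝ} (hk : 0 < k) (ht : 0 < t) :
    t ^ (-k) * exp (-(1 / t)) ≤ 2 * (2 * k) ^ k * (1 - exp (-t)) := by
  obtain ⟨u, hu, rfl⟩ : ∃ u : ℝ, 0 < u ∧ t = u⁻¹ := ⟨t⁻¹, inv_pos.2 ht, (inv_inv t).symm⟩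
  have hpow : u ^ k ≤ (2 * k) ^ k * exp (u / 2) := by
    have h := rpow_le_mul_exp hk (one_half_pos (α := ℝ)) hu.le
    rwa [div_div_eq_mul_div, div_one, mul_comm k, one_div_mul_eq_div] at h
  have hlin : 1 + u ≤ 2 * exp (u / 2) := by linarith [Real.add_one_le_exp (u / 2)]
  have hsplit : exp (u / 2) * exp (u / 2) * exp (-u) = 1 := by
    rw [← Real.exp_add, ← Real.exp_add, ← Real.exp_zero]
    ring_nf
  have hbase : (1 + u)⁻¹ ≤ 1 - exp (-u⁻¹) := by
    refine le_of_eq_of_le ?_ (div_one_add_le_one_sub_exp_neg (by linarith))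
    field_simp
    ring
  rw [Real.inv_rpow hu.le, ← Real.rpow_neg hu.le, neg_neg, one_div, inv_inv]
  calc u ^ k * exp (-u) ≤ 2 * (2 * k) ^ k * (1 + u)⁻¹ := by
        rw [← div_eq_mul_inv, le_div_iff₀ (by positivity)]
        calc u ^ k * exp (-u) * (1 + u)
            ≤ (2 * k) ^ k * exp (u / 2) * exp (-u) * (2 * exp (u / 2)) := by gcongr
          _ = 2 * (2 * k) ^ k * (exp (u / 2) * exp (u / 2) * exp (-u)) := by ring
          _ = 2 * (2 * k) ^ k := by rw [hsplit, mul_one]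
    _ ≤ 2 * (2 * k) ^ k * (1 - exp (-u⁻¹)) := by gcongr

lemma IsStableLaw.gaussianMixture_le_mul_rpow {α : ℝ} {μ : Measure ℝ} (hμ : IsStableLaw α μ)
    {k a : ℝ} (hk : 0 < k) (ha : 0 < a) :
    gaussianMixture μ k a ≤ 2 * (2 * k) ^ k * a ^ (-(k + α)) := by
  have hint := hμ.integrable_one_sub_exp (inv_nonneg.2 ha.le)
  calc gaussianMixture μ k a
      ≤ ∫ s, a ^ (-k) * (2 * (2 * k) ^ k * (1 - exp (-(a⁻¹ * s)))) ∂μ := by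
        refine integral_mono_ae (hμ.integrable_rpow_neg_mul_exp hk ha.le)
          ((hint.const_mul _).const_mul _) ?_
        filter_upwards [hμ.ae_pos] with s hs
        rw [rpow_neg_mul_exp_scale ha hs]
        exact mul_le_mul_of_nonneg_left (rpow_neg_mul_exp_le_one_sub_exp hk (by positivity))
          (by positivity)
    _ = a ^ (-k) * (2 * (2 * k) ^ k * (1 - exp (-a⁻¹ ^ α))) := by
        rw [integral_const_mul, integral_const_mul, hμ.integral_one_sub_exp (inv_pos.2 ha)]
    _ ≤ a ^ (-k) * (2 * (2 * k) ^ k * a⁻¹ ^ α) := by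
        gcongr
        exact one_sub_exp_neg_le _
    _ = 2 * (2 * k) ^ k * a ^ (-(k + α)) := by
        rw [Real.inv_rpow ha.le, ← Real.rpow_neg ha.le, neg_add, Real.rpow_add ha]
        ring

/-- A combination of the functions `1 - e^{-lt}` that is positive only for `t` in a compact subset
of `(0, ∞)`, while its integral against a stable law stays positive on large scales if `M` is
large. It is the test function for the lower bound on Gaussian mixtures. -/
def laplaceBump (M t : ℝ) : ℝ :=
  (1 - exp (-t)) - (1 - exp (-(M⁻¹ * t))) - (1 - exp (-(M * t))) / M

lemma laplaceBump_le {M t : ℝ} (hM : 0 < M) (ht : 0 < t) :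
    laplaceBump M t ≤ (1 - exp (-t)) - (t / (M + t) + t / (1 + M * t)) := by
  have hslow : t / (M + t) ≤ 1 - exp (-(M⁻¹ * t)) := by
    have hpos : 0 < M⁻¹ * t := by positivity
    refine le_of_eq_of_le ?_ (div_one_add_le_one_sub_exp_neg (by linarith))
    field_simp
  have hfast : t / (1 + M * t) ≤ (1 - exp (-(M * t))) / M := by
    have hpos : 0 < M * t := by positivity
    rw [le_div_iff₀ hM]
    refine le_of_eq_of_le ?_ (div_one_add_le_one_sub_exp_neg (by linarith))
    ring
  rw [laplaceBump]
  linarith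

lemma laplaceBump_nonpos_of_le {M t : ℝ} (hM : 1 ≤ M) (ht : 0 < t) (htM : M ^ 2 * t ≤ 1) :
    laplaceBump M t ≤ 0 := by
  have hM0 : 0 < M := by linarith
  have hone : t ≤ 1 := (le_mul_of_one_le_left ht.le (one_le_pow₀ hM)).trans htM
  have hrational : t ≤ t / (M + t) + t / (1 + M * t) := by
    rw [div_add_div _ _ (by positivity) (by positivity), le_div_iff₀ (by positivity)]
    have hkey : M ^ 2 * t + M * t * t ≤ 1 + M * t :=
      add_le_add htM (mul_le_of_le_one_right (by positivity) hone)
    nlinarith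
  linarith [laplaceBump_le hM0 ht, one_sub_exp_neg_le t]

lemma laplaceBump_nonpos_of_ge {M t : ℝ} (hM : 1 ≤ M) (htM : M ^ 2 ≤ t) :
    laplaceBump M t ≤ 0 := by
  have hM0 : 0 < M := by linarith
  have hone : 1 ≤ t := (one_le_pow₀ hM).trans htM
  have ht : 0 < t := by linarith
  have hrational : 1 ≤ t / (M + t) + t / (1 + M * t) := by
    rw [div_add_div _ _ (by positivity) (by positivity), le_div_iff₀ (by positivity)]
    nlinarith
  linarith [laplaceBump_le hM0 ht, exp_pos (-t)]

lemma laplaceBump_le_one {M t : ℝ} (hM : 0 < M) (ht : 0 ≤ t) : laplaceBump M t ≤ 1 := by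
  have hslow : exp (-(M⁻¹ * t)) ≤ 1 := exp_le_one_iff.2 (neg_nonpos.2 (by positivity))
  have hfast : exp (-(M * t)) ≤ 1 := exp_le_one_iff.2 (neg_nonpos.2 (by positivity))
  have hdiv : 0 ≤ (1 - exp (-(M * t))) / M := div_nonneg (by linarith) hM.le
  rw [laplaceBump]
  linarith [exp_pos (-t)]

lemma laplaceBump_le_rpow_neg_mul_exp {M k t : ℝ} (hM : 1 ≤ M) (hk : 0 ≤ k) (ht : 0 < t) :
    laplaceBump M t ≤ (M ^ 2) ^ k * exp (M ^ 2) * (t ^ (-k) * exp (-(1 / t))) := by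
  have hM0 : 0 < M := by linarith
  have hrhs : 0 ≤ (M ^ 2) ^ k * exp (M ^ 2) * (t ^ (-k) * exp (-(1 / t))) := by positivity
  rcases le_total (M ^ 2 * t) 1 with hsmall | hsmall
  · exact (laplaceBump_nonpos_of_le hM ht hsmall).trans hrhs
  rcases le_total (M ^ 2) t with hlarge | hlarge
  · exact (laplaceBump_nonpos_of_ge hM hlarge).trans hrhs
  refine (laplaceBump_le_one hM0 ht.le).trans ?_
  have hpow : 1 ≤ (M ^ 2) ^ k * t ^ (-k) := by
    rw [Real.rpow_neg ht.le, ← div_eq_mul_inv, one_le_div (by positivity)]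
    exact Real.rpow_le_rpow ht.le hlarge hk
  have hexp : 1 ≤ exp (M ^ 2) * exp (-(1 / t)) := by
    rw [← Real.exp_add, Real.one_le_exp_iff, ← sub_eq_add_neg, sub_nonneg, div_le_iff₀ ht]
    exact hsmall
  calc (1 : ℝ) ≤ ((M ^ 2) ^ k * t ^ (-k)) * (exp (M ^ 2) * exp (-(1 / t))) :=
        one_le_mul_of_one_le_of_one_le hpow hexp
    _ = (M ^ 2) ^ k * exp (M ^ 2) * (t ^ (-k) * exp (-(1 / t))) := by ring

namespace IsStableLaw

variable {α : ℝ} {μ : Measure ℝ}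

lemma integrable_laplaceBump (hμ : IsStableLaw α μ) {M l : ℝ} (hM : 0 < M) (hl : 0 < l) :
    Integrable (fun s => laplaceBump M (l * s)) μ := by
  simp only [laplaceBump, ← mul_assoc]
  exact ((hμ.integrable_one_sub_exp hl.le).sub (hμ.integrable_one_sub_exp (by positivity))).sub
    ((hμ.integrable_one_sub_exp (by positivity)).div_const M)

lemma integral_laplaceBump (hμ : IsStableLaw α μ) {M l : ℝ} (hM : 0 < M) (hl : 0 < l) :
    ∫ s, laplaceBump M (l * s) ∂μ =
      (1 - exp (-l ^ α)) - (1 - exp (-(M⁻¹ * l) ^ α)) - (1 - exp (-(M * l) ^ α)) / M := by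
  have hunit := hμ.integrable_one_sub_exp hl.le
  have hslow := hμ.integrable_one_sub_exp (l := M⁻¹ * l) (by positivity)
  have hdiff : Integrable (fun s => (1 - exp (-(l * s))) - (1 - exp (-(M⁻¹ * l * s)))) μ :=
    hunit.sub hslow
  have hfast := hμ.integrable_one_sub_exp (l := M * l) (by positivity)
  simp only [laplaceBump, ← mul_assoc]
  rw [integral_sub hdiff (hfast.div_const M), integral_sub hunit hslow, integral_div,
    hμ.integral_one_sub_exp hl, hμ.integral_one_sub_exp (by positivity),
    hμ.integral_one_sub_exp (by positivity)]

lemma rpow_div_four_le_integral_laplaceBump (hμ : IsStableLaw α μ) {M l : ℝ} (hM : 0 < M)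
    (hl : 0 < l) (hMα : M ^ (-α) ≤ 1 / 4) (hMα' : M ^ (α - 1) ≤ 1 / 4) (hlα : l ^ α ≤ 1 / 3) :
    l ^ α / 4 ≤ ∫ s, laplaceBump M (l * s) ∂μ := by
  have hpos : 0 < l ^ α := Real.rpow_pos_of_pos hl α
  have hunit : 3 / 4 * l ^ α ≤ 1 - exp (-l ^ α) := by
    refine le_trans ?_ (div_one_add_le_one_sub_exp_neg (by linarith))
    rw [le_div_iff₀ (by positivity)]
    nlinarith
  have hslow : 1 - exp (-(M⁻¹ * l) ^ α) ≤ 1 / 4 * l ^ α := by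
    refine (one_sub_exp_neg_le _).trans ?_
    rw [Real.mul_rpow (by positivity) hl.le, Real.inv_rpow hM.le, ← Real.rpow_neg hM.le]
    gcongr
  have hfast : (1 - exp (-(M * l) ^ α)) / M ≤ 1 / 4 * l ^ α := by
    refine (div_le_div_of_nonneg_right (one_sub_exp_neg_le _) hM.le).trans ?_
    rw [Real.mul_rpow hM.le hl.le, mul_div_right_comm, ← Real.rpow_sub_one hM.ne']
    gcongr
  rw [hμ.integral_laplaceBump hM hl]
  linarith

lemma rpow_neg_mul_integral_laplaceBump_le (hμ : IsStableLaw α μ) {M k a : ℝ} (hM : 1 ≤ M)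
    (hk : 0 < k) (ha : 0 < a) :
    a ^ (-k) * ∫ s, laplaceBump M (a⁻¹ * s) ∂μ ≤
      (M ^ 2) ^ k * exp (M ^ 2) * gaussianMixture μ k a := by
  rw [gaussianMixture, ← integral_const_mul, ← integral_const_mul]
  refine integral_mono_ae ((hμ.integrable_laplaceBump (by linarith) (inv_pos.2 ha)).const_mul _)
    ((hμ.integrable_rpow_neg_mul_exp hk ha.le).const_mul _) ?_
  filter_upwards [hμ.ae_pos] with s hs
  rw [rpow_neg_mul_exp_scale ha hs, mul_left_comm]
  exact mul_le_mul_of_nonneg_left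
    (laplaceBump_le_rpow_neg_mul_exp hM hk.le (by positivity)) (by positivity)

lemma exists_eventually_mul_rpow_le_gaussianMixture (hμ : IsStableLaw α μ) (hα : α < 1) {k : ℝ}
    (hk : 0 < k) : ∃ c > 0, ∀ᶠ a in atTop, c * a ^ (-(k + α)) ≤ gaussianMixture μ k a := by
  have hα0 := hμ.index_pos
  have hsmall : ∀ y > (0 : ℝ), ∀ ε > (0 : ℝ), ∀ᶠ x : ℝ in atTop, x ^ (-y) ≤ ε :=
    fun y hy ε hε => (tendsto_rpow_neg_atTop hy).eventually_le_const hε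
  obtain ⟨M, hM, hMα, hMα'⟩ : ∃ M : ℝ, 1 ≤ M ∧ M ^ (-α) ≤ 1 / 4 ∧ M ^ (-(1 - α)) ≤ 1 / 4 :=
    ((eventually_ge_atTop 1).and ((hsmall α hα0 (1 / 4) (by norm_num)).and
      (hsmall (1 - α) (by linarith) (1 / 4) (by norm_num)))).exists
  rw [neg_sub] at hMα'
  have hM0 : 0 < M := by linarith
  refine ⟨(4 * ((M ^ 2) ^ k * exp (M ^ 2)))⁻¹, by positivity, ?_⟩
  filter_upwards [eventually_gt_atTop 0, hsmall α hα0 (1 / 3) (by norm_num)] with a ha haα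
  have hinv : a⁻¹ ^ α = a ^ (-α) := by rw [Real.inv_rpow ha.le, Real.rpow_neg ha.le]
  have hbump := hμ.rpow_div_four_le_integral_laplaceBump hM0 (inv_pos.2 ha) hMα hMα' (hinv ▸ haα)
  rw [hinv] at hbump
  rw [inv_mul_le_iff₀ (by positivity), neg_add, Real.rpow_add ha]
  calc a ^ (-k) * a ^ (-α) = 4 * (a ^ (-k) * (a ^ (-α) / 4)) := by ring
    _ ≤ 4 * (a ^ (-k) * ∫ s, laplaceBump M (a⁻¹ * s) ∂μ) := by gcongr
    _ ≤ 4 * ((M ^ 2) ^ k * exp (M ^ 2) * gaussianMixture μ k a) := by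
      gcongr 4 * ?_
      exact hμ.rpow_neg_mul_integral_laplaceBump_le hM hk ha
    _ = 4 * ((M ^ 2) ^ k * exp (M ^ 2)) * gaussianMixture μ k a := by ring

end IsStableLaw

lemma exists_le_mul_one_add_rpow_of_antitoneOn {f : ℝ → ℝ} (hf : AntitoneOn f (Ici 0))
    {C p q : ℝ} (hC : 0 ≤ C) (hp : 0 ≤ p) (hq : 0 ≤ q) (h : ∀ a, 0 < a → f a ≤ C * a ^ (-p)) :
    ∃ C', ∀ a, 0 ≤ a → f a ≤ C' * (1 + q * a) ^ (-p) := by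
  have hmax : 0 ≤ max C (f 0) := hC.trans (le_max_left _ _)
  have hle : ∀ a, 0 ≤ a → f a ≤ max C (f 0) * (max 1 a) ^ (-p) := by
    intro a ha
    rcases le_total a 1 with ha1 | ha1
    · rw [max_eq_left ha1, Real.one_rpow, mul_one]
      exact (hf self_mem_Ici ha ha).trans (le_max_right _ _)
    · rw [max_eq_right ha1]
      exact (h a (by linarith)).trans (by gcongr; exact le_max_left _ _)
  refine ⟨max C (f 0) * (1 + q) ^ p, fun a ha => (hle a ha).trans ?_⟩
  rw [mul_assoc]
  refine mul_le_mul_of_nonneg_left ?_ hmax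
  have hcomp : (1 + q * a) / (1 + q) ≤ max 1 a := by
    rw [div_le_iff₀ (by positivity)]
    nlinarith [le_max_left 1 a, le_max_right 1 a]
  calc (max 1 a) ^ (-p) ≤ ((1 + q * a) / (1 + q)) ^ (-p) :=
        Real.rpow_le_rpow_of_nonpos (by positivity) hcomp (neg_nonpos.2 hp)
    _ = (1 + q) ^ p * (1 + q * a) ^ (-p) := by
        rw [Real.div_rpow (by positivity) (by positivity), Real.rpow_neg (x := 1 + q)
          (by positivity), div_inv_eq_mul, mul_comm]

lemma exists_mul_one_add_rpow_le_of_antitoneOn {f : ℝ → ℝ} (hf : AntitoneOn f (Ici 0))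
    {c p q : ℝ} (hc : 0 < c) (hq : 0 < q) (h : ∀ᶠ a in atTop, c * a ^ (-p) ≤ f a) :
    ∃ c' > 0, ∀ a, 0 ≤ a → c' * (1 + q * a) ^ (-p) ≤ f a := by
  obtain ⟨A, hA, htail⟩ := (atTop_basis_Ioi' (0 : ℝ)).eventually_iff.1 h
  let B := A + 1 + q⁻¹
  have hB : 0 < B := by positivity
  refine ⟨c * B ^ (-p), by positivity, fun a ha => ?_⟩
  have hmem : B * (1 + q * a) ∈ Ioi A := by
    have : B ≤ B * (1 + q * a) := le_mul_of_one_le_right hB.le (by nlinarith)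
    exact lt_of_lt_of_le (by linarith [inv_pos.2 hq]) this
  have hge : a ≤ B * (1 + q * a) := by
    have hqa : q⁻¹ * (q * a) = a := inv_mul_cancel_left₀ hq.ne' a
    have hrest : 0 ≤ (A + 1) * (1 + q * a) + q⁻¹ := by positivity
    linarith [show B * (1 + q * a) = (A + 1) * (1 + q * a) + q⁻¹ + q⁻¹ * (q * a) by ring]
  calc c * B ^ (-p) * (1 + q * a) ^ (-p) = c * (B * (1 + q * a)) ^ (-p) := by
        rw [Real.mul_rpow hB.le (by positivity), mul_assoc]
    _ ≤ f (B * (1 + q * a)) := htail hmem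
    _ ≤ f a := hf ha (ha.trans hge) hge

lemma hasFDerivAt_rpow_neg_mul_exp_norm_sq {E : Type*} [NormedAddCommGroup E]
    [InnerProductSpace ℝ E] (k : ℝ) {s : ℝ} (hs : 0 < s) (w : E) :
    HasFDerivAt (fun w : E => s ^ (-k) * exp (-(‖w‖ ^ 2 / 4 / s)))
      ((-(1 / 2) * (s ^ (-(k + 1)) * exp (-(‖w‖ ^ 2 / 4 / s)))) • innerSL ℝ w) w := by
  have hsq : HasFDerivAt (fun w : E => ‖w‖ ^ 2) (2 • innerSL ℝ w) w :=
    (hasStrictFDerivAt_norm_sq w).hasFDerivAt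
  have hdiv : ∀ w : E, ‖w‖ ^ 2 / 4 / s = ‖w‖ ^ 2 * (4 * s)⁻¹ := fun w => by
    rw [div_div, div_eq_mul_inv]
  simp only [hdiv]
  refine (((hsq.mul_const (4 * s)⁻¹).fun_neg).exp.const_mul (s ^ (-k))).congr_fderiv ?_
  ext v
  rw [neg_add, Real.rpow_add hs, Real.rpow_neg_one]
  simp only [smul_neg, neg_smul, neg_apply, smul_apply,
    innerSL_apply_apply, smul_eq_mul, nsmul_eq_mul, Nat.cast_ofNat, neg_mul]
  field_simp
  ring

namespace IsStableLaw

variable {α : ℝ} {μ : Measure ℝ} {E : Type*} [NormedAddCommGroup E]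

lemma exists_gaussianMixture_le (hμ : IsStableLaw α μ) {k : ℝ} (hk : 0 < k) :
    ∃ C, ∀ w : E, gaussianMixture μ k (‖w‖ ^ 2 / 4) ≤ C * (1 + ‖w‖ ^ 2) ^ (-(k + α)) := by
  obtain ⟨C, hC⟩ := exists_le_mul_one_add_rpow_of_antitoneOn (q := 4)
    (hμ.antitoneOn_gaussianMixture hk) (by positivity) (add_pos hk hμ.index_pos).le (by norm_num)
    fun a => hμ.gaussianMixture_le_mul_rpow hk
  refine ⟨C, fun w => ?_⟩
  have hw : 4 * (‖w‖ ^ 2 / 4) = ‖w‖ ^ 2 := by ring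
  have hupper := hC (‖w‖ ^ 2 / 4) (by positivity)
  rwa [hw] at hupper

lemma exists_le_gaussianMixture (hμ : IsStableLaw α μ) (hα : α < 1) {k : ℝ} (hk : 0 < k) :
    ∃ c > 0, ∀ w : E, c * (1 + ‖w‖ ^ 2) ^ (-(k + α)) ≤ gaussianMixture μ k (‖w‖ ^ 2 / 4) := by
  obtain ⟨c₀, hc₀, htail⟩ := hμ.exists_eventually_mul_rpow_le_gaussianMixture hα hk
  obtain ⟨c, hc, hle⟩ := exists_mul_one_add_rpow_le_of_antitoneOn (q := 4)
    (hμ.antitoneOn_gaussianMixture hk) hc₀ (by norm_num) htail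
  refine ⟨c, hc, fun w => ?_⟩
  have hw : 4 * (‖w‖ ^ 2 / 4) = ‖w‖ ^ 2 := by ring
  have hlower := hle (‖w‖ ^ 2 / 4) (by positivity)
  rwa [hw] at hlower

variable [InnerProductSpace ℝ E]

lemma hasFDerivAt_gaussianMixture (hμ : IsStableLaw α μ) {k : ℝ} (hk : 0 < k) (w : E) :
    HasFDerivAt (fun w : E => gaussianMixture μ k (‖w‖ ^ 2 / 4))
      ((-(1 / 2) * gaussianMixture μ (k + 1) (‖w‖ ^ 2 / 4)) • innerSL ℝ w) w := by
  have hint : ∀ {k : ℝ}, 0 < k → ∀ w : E,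
      Integrable (fun s => s ^ (-k) * exp (-(‖w‖ ^ 2 / 4 / s))) μ :=
    fun hk w => hμ.integrable_rpow_neg_mul_exp hk (by positivity)
  have hk' : 0 < k + 1 := by linarith
  have hderiv : (-(1 / 2) * gaussianMixture μ (k + 1) (‖w‖ ^ 2 / 4)) • innerSL ℝ w =
      ∫ s, (-(1 / 2) * (s ^ (-(k + 1)) * exp (-(‖w‖ ^ 2 / 4 / s)))) • innerSL ℝ w ∂μ := by
    rw [integral_smul_const, integral_const_mul, gaussianMixture]
  rw [hderiv]
  refine hasFDerivAt_integral_of_dominated_of_fderiv_le (ball_mem_nhds w one_pos)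
    (F := fun w s => s ^ (-k) * exp (-(‖w‖ ^ 2 / 4 / s)))
    (F' := fun w s => (-(1 / 2) * (s ^ (-(k + 1)) * exp (-(‖w‖ ^ 2 / 4 / s)))) • innerSL ℝ w)
    (bound := fun s => s ^ (-(k + 1)) * (‖w‖ + 1))
    (.of_forall fun w => (hint hk w).aestronglyMeasurable) (hint hk w)
    (((hint hk' w).const_mul _).smul_const _).aestronglyMeasurable ?_
    ((hμ.integrable_rpow_neg hk').mul_const _) ?_
  · filter_upwards [hμ.ae_pos] with s hs x hx
    have hx' : ‖x‖ ≤ ‖w‖ + 1 := by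
      linarith [norm_sub_norm_le x w, mem_ball_iff_norm.1 hx]
    have hexp : exp (-(‖x‖ ^ 2 / 4 / s)) ≤ 1 :=
      Real.exp_le_one_iff.2 (neg_nonpos.2 (by positivity))
    rw [norm_smul, innerSL_apply_norm, norm_mul, norm_mul, Real.norm_of_nonneg (exp_pos _).le,
      Real.norm_of_nonneg (Real.rpow_nonneg hs.le _)]
    calc ‖(-(1 / 2) : ℝ)‖ * (s ^ (-(k + 1)) * exp (-(‖x‖ ^ 2 / 4 / s))) * ‖x‖
        ≤ 1 * (s ^ (-(k + 1)) * 1) * (‖w‖ + 1) := by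
          gcongr
          norm_num
      _ = s ^ (-(k + 1)) * (‖w‖ + 1) := by ring
  · filter_upwards [hμ.ae_pos] with s hs x _
    exact hasFDerivAt_rpow_neg_mul_exp_norm_sq k hs x

end IsStableLaw

/-- `f` satisfies the estimates, up to first order derivatives, of a symbol of order `m`:
`f = O((1 + |w|²)^{m/2})` and `∇f = O((1 + |w|²)^{(m-1)/2})`. -/
structure IsSymbolOfOrder {E : Type*} [NormedAddCommGroup E] [NormedSpace ℝ E] (m : ℝ)
    (f : E → ℝ) : Prop where
  differentiable : Differentiable ℝ f
  exists_bound : ∃ C, ∀ w, |f w| ≤ C * (1 + ‖w‖ ^ 2) ^ (m / 2) ∧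
    ‖fderiv ℝ f w‖ ≤ C * (1 + ‖w‖ ^ 2) ^ ((m - 1) / 2)

lemma norm_le_one_add_norm_sq_rpow {E : Type*} [SeminormedAddCommGroup E] (w : E) :
    ‖w‖ ≤ (1 + ‖w‖ ^ 2) ^ (1 / 2 : ℝ) := by
  rw [← Real.sqrt_eq_rpow]
  exact Real.le_sqrt_of_sq_le (by linarith)

namespace IsSymbolOfOrder

section NormedSpace

variable {E : Type*} [NormedAddCommGroup E] [NormedSpace ℝ E] {m m' : ℝ} {f g : E → ℝ}

lemma of_bounds (hf : Differentiable ℝ f) {C₀ C₁ : ℝ}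
    (h₀ : ∀ w, |f w| ≤ C₀ * (1 + ‖w‖ ^ 2) ^ (m / 2))
    (h₁ : ∀ w, ‖fderiv ℝ f w‖ ≤ C₁ * (1 + ‖w‖ ^ 2) ^ ((m - 1) / 2)) : IsSymbolOfOrder m f := by
  refine ⟨hf, max C₀ C₁, fun w => ⟨(h₀ w).trans ?_, (h₁ w).trans ?_⟩⟩ <;> gcongr
  exacts [le_max_left _ _, le_max_right _ _]

lemma eventually_bound (hf : IsSymbolOfOrder m f) :
    ∀ᶠ C in atTop, ∀ w, |f w| ≤ C * (1 + ‖w‖ ^ 2) ^ (m / 2) ∧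
      ‖fderiv ℝ f w‖ ≤ C * (1 + ‖w‖ ^ 2) ^ ((m - 1) / 2) := by
  obtain ⟨C, hC⟩ := hf.exists_bound
  filter_upwards [eventually_ge_atTop C] with D hD w
  exact ⟨(hC w).1.trans (by gcongr), (hC w).2.trans (by gcongr)⟩

lemma const_mul (hf : IsSymbolOfOrder m f) (c : ℝ) : IsSymbolOfOrder m fun w => c * f w := by
  obtain ⟨C, hC⟩ := hf.exists_bound
  refine ⟨hf.differentiable.const_mul c, |c| * C, fun w => ⟨?_, ?_⟩⟩
  · rw [abs_mul, mul_assoc]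
    exact mul_le_mul_of_nonneg_left (hC w).1 (abs_nonneg c)
  · rw [fderiv_const_mul (hf.differentiable w), norm_smul, Real.norm_eq_abs, mul_assoc]
    exact mul_le_mul_of_nonneg_left (hC w).2 (abs_nonneg c)

lemma sub (hf : IsSymbolOfOrder m f) (hg : IsSymbolOfOrder m g) :
    IsSymbolOfOrder m fun w => f w - g w := by
  obtain ⟨C, hC⟩ := hf.exists_bound
  obtain ⟨D, hD⟩ := hg.exists_bound
  refine ⟨hf.differentiable.sub hg.differentiable, C + D, fun w => ⟨?_, ?_⟩⟩ <;> rw [add_mul]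
  · exact (abs_sub _ _).trans (add_le_add (hC w).1 (hD w).1)
  · rw [fderiv_fun_sub (hf.differentiable w) (hg.differentiable w)]
    exact (norm_sub_le _ _).trans (add_le_add (hC w).2 (hD w).2)

lemma mul (hf : IsSymbolOfOrder m f) (hg : IsSymbolOfOrder m' g) :
    IsSymbolOfOrder (m + m') fun w => f w * g w := by
  obtain ⟨C, hC⟩ := hf.exists_bound
  obtain ⟨D, hD⟩ := hg.exists_bound
  have hpos : ∀ w : E, 0 < 1 + ‖w‖ ^ 2 := fun w => by positivity
  refine .of_bounds (hf.differentiable.mul hg.differentiable) (C₀ := C * D) (C₁ := C * D + D * C)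
    (fun w => ?_) fun w => ?_
  · rw [abs_mul, add_div, Real.rpow_add (hpos w), mul_mul_mul_comm]
    exact mul_le_mul (hC w).1 (hD w).1 (abs_nonneg _) ((abs_nonneg _).trans (hC w).1)
  · have hleft : (m + m' - 1) / 2 = m / 2 + (m' - 1) / 2 := by ring
    have hright : (m + m' - 1) / 2 = m' / 2 + (m - 1) / 2 := by ring
    rw [fderiv_fun_mul (hf.differentiable w) (hg.differentiable w), add_mul]
    refine (norm_add_le _ _).trans (add_le_add ?_ ?_) <;> rw [norm_smul, Real.norm_eq_abs]
    · rw [hleft, Real.rpow_add (hpos w), mul_mul_mul_comm]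
      exact mul_le_mul (hC w).1 (hD w).2 (norm_nonneg _) ((abs_nonneg _).trans (hC w).1)
    · rw [hright, Real.rpow_add (hpos w), mul_mul_mul_comm]
      exact mul_le_mul (hD w).1 (hC w).2 (norm_nonneg _) ((abs_nonneg _).trans (hD w).1)

end NormedSpace

variable {E : Type*} [NormedAddCommGroup E] [InnerProductSpace ℝ E]

lemma norm_sq : IsSymbolOfOrder 2 fun w : E => ‖w‖ ^ 2 := by
  have hderiv : ∀ w : E, HasFDerivAt (fun w : E => ‖w‖ ^ 2) (2 • innerSL ℝ w) w := fun w =>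
    (hasStrictFDerivAt_norm_sq w).hasFDerivAt
  refine .of_bounds (fun w => (hderiv w).differentiableAt) (C₀ := 1) (C₁ := 2)
    (fun w => ?_) fun w => ?_
  · rw [abs_of_nonneg (by positivity), div_self two_ne_zero, Real.rpow_one]
    linarith
  · rw [(hderiv w).fderiv]
    refine (norm_nsmul_le (n := 2) (a := innerSL ℝ w)).trans ?_
    rw [innerSL_apply_norm, Nat.cast_ofNat, show ((2 : ℝ) - 1) / 2 = 1 / 2 by norm_num]
    gcongr
    exact norm_le_one_add_norm_sq_rpow w

lemma gaussianMixture {α : ℝ} {μ : Measure ℝ} (hμ : IsStableLaw α μ) {k : ℝ} (hk : 0 < k) :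
    IsSymbolOfOrder (-2 * (k + α)) fun w : E => gaussianMixture μ k (‖w‖ ^ 2 / 4) := by
  obtain ⟨C, hC⟩ := hμ.exists_gaussianMixture_le (E := E) hk
  obtain ⟨D, hD⟩ := hμ.exists_gaussianMixture_le (E := E) (k := k + 1) (by linarith)
  have hderiv := hμ.hasFDerivAt_gaussianMixture (E := E) hk
  have hnonneg := gaussianMixture_nonneg hμ.ae_pos
  refine .of_bounds (fun w => (hderiv w).differentiableAt) (C₀ := C) (C₁ := D)
    (fun w => ?_) fun w => ?_
  · rw [abs_of_nonneg (hnonneg _ _), show -2 * (k + α) / 2 = -(k + α) by ring]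
    exact hC w
  · have hexp : (-2 * (k + α) - 1) / 2 = -(k + 1 + α) + 1 / 2 := by ring
    rw [(hderiv w).fderiv, norm_smul, innerSL_apply_norm, norm_mul,
      Real.norm_of_nonneg (hnonneg _ _), hexp, Real.rpow_add (by positivity), ← mul_assoc]
    refine mul_le_mul ?_ (norm_le_one_add_norm_sq_rpow w) (norm_nonneg w)
      ((hnonneg _ _).trans (hD w))
    refine (mul_le_of_le_one_left (hnonneg _ _) ?_).trans (hD w)
    norm_num

end IsSymbolOfOrder

lemma IsStableLaw.integral_exp_neg_norm_sq_mul {σ : ℝ} {μ : Measure ℝ}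
    (hμ : IsStableLaw (σ / 2) μ) {E : Type*} [NormedAddCommGroup E] (ξ : E) :
    ∫ s, exp (-(‖ξ‖ ^ 2 * s)) ∂μ = exp (-‖ξ‖ ^ σ) := by
  have := hμ.toIsProbabilityMeasure
  rcases eq_or_ne ξ 0 with rfl | hξ
  · have hσ : 0 < σ := by linarith [hμ.index_pos]
    simp [Real.zero_rpow hσ.ne']
  · have hnorm := norm_pos_iff.2 hξ
    rw [hμ.integral_exp_neg_mul _ (by positivity), ← Real.rpow_natCast, ← Real.rpow_mul hnorm.le,
      Nat.cast_ofNat, mul_div_cancel₀ _ two_ne_zero]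

section CosTransform

variable {V : Type*} [NormedAddCommGroup V] [InnerProductSpace ℝ V] [FiniteDimensional ℝ V]
  [MeasurableSpace V] [BorelSpace V]

/-- The unnormalised cosine transform of `f`, which for an even integrable function `f` is its
Fourier transform `∫ f(ξ) e^{i⟨w, ξ⟩} dξ`. -/
def cosTransform (f : V → ℝ) (w : V) : ℝ := ∫ ξ, f ξ * cos ⟪w, ξ⟫_ℝ

lemma re_integral_mul_cexp_eq_cosTransform {f : V → ℝ} (hf : Integrable f) (w : V) :
    (∫ ξ, (f ξ : ℂ) * Complex.exp (Complex.I * (⟪w, ξ⟫_ℝ : ℂ))).re = cosTransform f w := by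
  have hint : Integrable fun ξ => (f ξ : ℂ) * Complex.exp (Complex.I * (⟪w, ξ⟫_ℝ : ℂ)) := by
    refine hf.ofReal.mul_bdd (c := 1) (Continuous.aestronglyMeasurable (by fun_prop)) ?_
    exact .of_forall fun ξ => by rw [mul_comm, Complex.norm_exp_ofReal_mul_I]
  refine (integral_re hint).symm.trans (integral_congr_ae (.of_forall fun ξ => ?_))
  change Complex.re _ = _
  rw [Complex.re_ofReal_mul, mul_comm Complex.I, Complex.exp_ofReal_mul_I_re]

lemma cosTransform_exp_neg_norm_sq_mul {s : ℝ} (hs : 0 < s) (w : V) :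
    cosTransform (fun ξ : V => exp (-(‖ξ‖ ^ 2 * s))) w =
      π ^ (Module.finrank ℝ V / 2 : ℝ) *
        (s ^ (-(Module.finrank ℝ V / 2 : ℝ)) * exp (-(‖w‖ ^ 2 / 4 / s))) := by
  have hs' : 0 < (s : ℂ).re := hs
  have hcexp : ∀ ξ : V, ((exp (-(‖ξ‖ ^ 2 * s)) : ℝ) : ℂ) *
      Complex.exp (Complex.I * (⟪w, ξ⟫_ℝ : ℂ)) =
      Complex.exp (-(s : ℂ) * ‖ξ‖ ^ 2 + Complex.I * (⟪w, ξ⟫_ℝ : ℂ)) := fun ξ => by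
    rw [Complex.exp_add, mul_comm (‖ξ‖ ^ 2), ← neg_mul]
    push_cast
    rfl
  have hint : Integrable fun ξ : V => exp (-(‖ξ‖ ^ 2 * s)) := by
    simpa [Complex.norm_exp, mul_comm s, ← Complex.ofReal_pow] using
      (GaussianFourier.integrable_cexp_neg_mul_sq_norm_add hs' 0 (0 : V)).norm
  rw [← re_integral_mul_cexp_eq_cosTransform hint]
  simp_rw [hcexp]
  rw [GaussianFourier.integral_cexp_neg_mul_sq_norm_add hs', ← mul_assoc, Real.rpow_neg hs.le,
    ← div_eq_mul_inv, ← Real.div_rpow Real.pi_pos.le hs.le, ← Complex.ofReal_re (_ * _)]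
  push_cast
  rw [Complex.ofReal_cpow (by positivity), Complex.I_sq]
  push_cast
  congr 3
  field_simp

lemma cosTransform_comp_smul (f : V → ℝ) {r : ℝ} (hr : 0 < r) (w : V) :
    cosTransform (fun ξ => f (r • ξ)) w =
      (r ^ Module.finrank ℝ V)⁻¹ * cosTransform f (r⁻¹ • w) := by
  have hinner : ∀ ξ : V, ⟪w, ξ⟫_ℝ = ⟪r⁻¹ • w, r • ξ⟫_ℝ := fun ξ => by
    rw [real_inner_smul_left, real_inner_smul_right, inv_mul_cancel_left₀ hr.ne']
  simp only [cosTransform, hinner]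
  rw [Measure.integral_comp_smul volume (fun ξ => f ξ * cos ⟪r⁻¹ • w, ξ⟫_ℝ),
    abs_of_pos (by positivity), smul_eq_mul]

section Nontrivial

variable [Nontrivial V] {σ : ℝ}

lemma integrable_norm_rpow_mul_exp_neg_mul_norm_rpow {p b : ℝ} (hp : -Module.finrank ℝ V < p)
    (hσ : 0 < σ) (hb : 0 < b) : Integrable fun ξ : V => ‖ξ‖ ^ p * exp (-(b * ‖ξ‖ ^ σ)) := by
  have hd : ((Module.finrank ℝ V - 1 : ℕ) : ℝ) = Module.finrank ℝ V - 1 :=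
    Nat.cast_pred Module.finrank_pos
  rw [integrable_fun_norm_addHaar volume (f := fun y : ℝ => y ^ p * exp (-(b * y ^ σ)))]
  refine (integrableOn_rpow_mul_exp_neg_mul_rpow (p := σ) (b := b)
    (s := (Module.finrank ℝ V - 1 : ℕ) + p) (by linarith) hσ hb).congr_fun
    (fun y hy => ?_) measurableSet_Ioi
  simp only [Real.rpow_add hy, Real.rpow_natCast, neg_mul, smul_eq_mul, mul_assoc]

lemma integrable_exp_neg_mul_norm_rpow (hσ : 0 < σ) {b : ℝ} (hb : 0 < b) :
    Integrable fun ξ : V => exp (-(b * ‖ξ‖ ^ σ)) := by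
  have hd : (0 : ℝ) < Module.finrank ℝ V := Nat.cast_pos.2 Module.finrank_pos
  simpa only [Real.rpow_zero, one_mul] using
    integrable_norm_rpow_mul_exp_neg_mul_norm_rpow (V := V) (neg_lt_zero.2 hd) hσ hb

lemma hasDerivAt_cosTransform_exp_neg_mul_norm_rpow (hσ : 0 < σ) (w : V) {t : ℝ} (ht : 0 < t) :
    HasDerivAt (fun t => cosTransform (fun ξ : V => exp (-(t * ‖ξ‖ ^ σ))) w)
      (-cosTransform (fun ξ : V => ‖ξ‖ ^ σ * exp (-(t * ‖ξ‖ ^ σ))) w) t := by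
  have hpow : Continuous fun ξ : V => ‖ξ‖ ^ σ := continuous_norm.rpow_const fun _ => .inr hσ.le
  have hd : -(Module.finrank ℝ V : ℝ) < σ := by linarith [(Module.finrank ℝ V).cast_nonneg (α := ℝ)]
  have hderiv : -cosTransform (fun ξ : V => ‖ξ‖ ^ σ * exp (-(t * ‖ξ‖ ^ σ))) w =
      ∫ ξ : V, -(‖ξ‖ ^ σ * exp (-(t * ‖ξ‖ ^ σ)) * cos ⟪w, ξ⟫_ℝ) := (integral_neg _).symm
  rw [hderiv]
  refine (hasDerivAt_integral_of_dominated_loc_of_deriv_le (Ioi_mem_nhds (half_lt_self ht))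
    (F := fun t (ξ : V) => exp (-(t * ‖ξ‖ ^ σ)) * cos ⟪w, ξ⟫_ℝ)
    (F' := fun t (ξ : V) => -(‖ξ‖ ^ σ * exp (-(t * ‖ξ‖ ^ σ)) * cos ⟪w, ξ⟫_ℝ))
    (bound := fun ξ => ‖ξ‖ ^ σ * exp (-(t / 2 * ‖ξ‖ ^ σ)))
    (.of_forall fun t => Continuous.aestronglyMeasurable (by fun_prop)) ?_
    (Continuous.aestronglyMeasurable (by fun_prop)) ?_
    (integrable_norm_rpow_mul_exp_neg_mul_norm_rpow hd hσ (half_pos ht)) ?_).2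
  · exact (integrable_exp_neg_mul_norm_rpow hσ ht).mul_bdd (c := 1)
      (Continuous.aestronglyMeasurable (by fun_prop)) (.of_forall fun ξ => abs_cos_le_one _)
  · filter_upwards with ξ t' ht'
    rw [norm_neg, norm_mul, Real.norm_of_nonneg (by positivity)]
    refine (mul_le_of_le_one_right (by positivity) (abs_cos_le_one _)).trans ?_
    gcongr
    exact le_of_lt ht'
  · filter_upwards with ξ t' _
    refine (((hasDerivAt_id t').mul_const (‖ξ‖ ^ σ)).fun_neg.exp.mul_const _).congr_deriv ?_
    simp only [id_eq]
    ring

-- Euler's identity for the family `e^{-r^σ|ξ|^σ} = e^{-|rξ|^σ}`: both sides are minus its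
-- derivative at `r = 1` after the cosine transform.
lemma mul_cosTransform_norm_rpow_mul_exp_neg_norm_rpow (hσ : 0 < σ) {w : V} {D : V →L[ℝ] ℝ}
    (hD : HasFDerivAt (cosTransform fun ξ : V => exp (-‖ξ‖ ^ σ)) D w) :
    σ * cosTransform (fun ξ : V => ‖ξ‖ ^ σ * exp (-‖ξ‖ ^ σ)) w =
      Module.finrank ℝ V * cosTransform (fun ξ : V => exp (-‖ξ‖ ^ σ)) w + D w := by
  have hleft : HasDerivAt (fun r : ℝ => cosTransform (fun ξ : V => exp (-(r ^ σ * ‖ξ‖ ^ σ))) w)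
      (-(σ * cosTransform (fun ξ : V => ‖ξ‖ ^ σ * exp (-‖ξ‖ ^ σ)) w)) 1 := by
    have hpow : HasDerivAt (fun r : ℝ => r ^ σ) σ 1 := by
      simpa using Real.hasDerivAt_rpow_const (x := 1) (p := σ) (.inl one_ne_zero)
    have hone := hasDerivAt_cosTransform_exp_neg_mul_norm_rpow hσ w one_pos
    rw [← Real.one_rpow σ] at hone
    refine (hone.comp (1 : ℝ) hpow).congr_deriv ?_
    simp only [Real.one_rpow, one_mul]
    ring
  have hright : HasDerivAt (fun r : ℝ => (r ^ Module.finrank ℝ V)⁻¹ *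
      cosTransform (fun ξ : V => exp (-‖ξ‖ ^ σ)) (r⁻¹ • w))
      (-(Module.finrank ℝ V * cosTransform (fun ξ : V => exp (-‖ξ‖ ^ σ)) w + D w)) 1 := by
    have hpow := (hasDerivAt_pow (Module.finrank ℝ V) (1 : ℝ)).fun_inv (by simp)
    have hsmul : HasDerivAt (fun r : ℝ => r⁻¹ • w) (-w) 1 := by
      simpa using (hasDerivAt_inv (one_ne_zero (α := ℝ))).smul_const w
    have hcomp := HasFDerivAt.comp_hasDerivAt (1 : ℝ) (by simpa using hD) hsmul
    refine (hpow.mul hcomp).congr_deriv ?_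
    simp only [one_pow, mul_one, div_one, Function.comp_apply, inv_one, one_smul, neg_mul, map_neg,
      mul_neg, one_mul, neg_add_rev]
    ring
  have heq : (fun r : ℝ => cosTransform (fun ξ : V => exp (-(r ^ σ * ‖ξ‖ ^ σ))) w) =ᶠ[𝓝 1]
      fun r => (r ^ Module.finrank ℝ V)⁻¹ *
        cosTransform (fun ξ : V => exp (-‖ξ‖ ^ σ)) (r⁻¹ • w) := by
    filter_upwards [lt_mem_nhds one_pos] with r hr
    rw [← cosTransform_comp_smul _ hr]
    simp only [norm_smul, Real.norm_of_nonneg hr.le, Real.mul_rpow hr.le (norm_nonneg _)]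
  exact neg_injective (hleft.unique (hright.congr_of_eventuallyEq heq))

namespace IsStableLaw

variable {μ : Measure ℝ}

lemma cosTransform_exp_neg_norm_rpow (hμ : IsStableLaw (σ / 2) μ) (w : V) :
    cosTransform (fun ξ : V => exp (-‖ξ‖ ^ σ)) w = π ^ (Module.finrank ℝ V / 2 : ℝ) *
      gaussianMixture μ (Module.finrank ℝ V / 2) (‖w‖ ^ 2 / 4) := by
  have := hμ.toIsProbabilityMeasure
  have hσ : 0 < σ := by linarith [hμ.index_pos]
  let F : V × ℝ → ℝ := fun p => exp (-(‖p.1‖ ^ 2 * p.2)) * cos ⟪w, p.1⟫_ℝ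
  have hexp : Integrable (fun p : V × ℝ => exp (-(‖p.1‖ ^ 2 * p.2))) (volume.prod μ) := by
    refine (integrable_prod_iff (Continuous.aestronglyMeasurable (by fun_prop))).2
      ⟨.of_forall fun ξ => integrable_exp_neg_mul hμ.ae_pos (sq_nonneg ‖ξ‖), ?_⟩
    simp only [Real.norm_of_nonneg (exp_pos _).le, hμ.integral_exp_neg_norm_sq_mul]
    simpa only [one_mul] using integrable_exp_neg_mul_norm_rpow (V := V) hσ one_pos
  have hFint : Integrable F (volume.prod μ) := hexp.mul_bdd (c := 1)
    (Continuous.aestronglyMeasurable (by fun_prop)) (.of_forall fun p => abs_cos_le_one _)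
  calc cosTransform (fun ξ : V => exp (-‖ξ‖ ^ σ)) w = ∫ ξ, ∫ s, F (ξ, s) ∂μ := by
        simp only [F, cosTransform, integral_mul_const, hμ.integral_exp_neg_norm_sq_mul]
    _ = ∫ s, cosTransform (fun ξ => exp (-(‖ξ‖ ^ 2 * s))) w ∂μ := integral_integral_swap hFint
    _ = _ := by
        rw [gaussianMixture, ← integral_const_mul]
        refine integral_congr_ae ?_
        filter_upwards [hμ.ae_pos] with s hs
        exact cosTransform_exp_neg_norm_sq_mul hs w

lemma cosTransform_norm_rpow_mul_exp_neg_norm_rpow (hμ : IsStableLaw (σ / 2) μ) (w : V) :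
    cosTransform (fun ξ : V => ‖ξ‖ ^ σ * exp (-‖ξ‖ ^ σ)) w =
      π ^ (Module.finrank ℝ V / 2 : ℝ) / σ *
        (Module.finrank ℝ V * gaussianMixture μ (Module.finrank ℝ V / 2) (‖w‖ ^ 2 / 4) -
          1 / 2 * (‖w‖ ^ 2 * gaussianMixture μ (Module.finrank ℝ V / 2 + 1) (‖w‖ ^ 2 / 4))) := by
  have hσ : 0 < σ := by linarith [hμ.index_pos]
  have hd : (0 : ℝ) < Module.finrank ℝ V / 2 := half_pos (Nat.cast_pos.2 Module.finrank_pos)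
  have hD := (hμ.hasFDerivAt_gaussianMixture hd w).const_mul (π ^ (Module.finrank ℝ V / 2 : ℝ))
  simp only [← hμ.cosTransform_exp_neg_norm_rpow] at hD
  have heuler := mul_cosTransform_norm_rpow_mul_exp_neg_norm_rpow hσ hD
  rw [hμ.cosTransform_exp_neg_norm_rpow] at heuler
  simp only [smul_apply, innerSL_apply_apply, real_inner_self_eq_norm_sq, smul_eq_mul] at heuler
  rw [div_mul_eq_mul_div, eq_div_iff hσ.ne', mul_comm, heuler]
  ring

end IsStableLaw

variable (V)

lemma isSymbolOfOrder_cosTransform_exp_neg_norm_rpow (hσ : 0 < σ) (hσ2 : σ ≤ 2) :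
    IsSymbolOfOrder (-(Module.finrank ℝ V + σ))
      (cosTransform fun ξ : V => exp (-‖ξ‖ ^ σ)) := by
  obtain ⟨μ, hμ⟩ := exists_isStableLaw (half_pos hσ) (by linarith)
  have hd : (0 : ℝ) < Module.finrank ℝ V / 2 := half_pos (Nat.cast_pos.2 Module.finrank_pos)
  rw [funext hμ.cosTransform_exp_neg_norm_rpow]
  convert (IsSymbolOfOrder.gaussianMixture hμ hd).const_mul _ using 1
  ring

lemma isSymbolOfOrder_cosTransform_norm_rpow_mul_exp_neg_norm_rpow (hσ : 0 < σ) (hσ2 : σ ≤ 2) :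
    IsSymbolOfOrder (-(Module.finrank ℝ V + σ))
      (cosTransform fun ξ : V => ‖ξ‖ ^ σ * exp (-‖ξ‖ ^ σ)) := by
  obtain ⟨μ, hμ⟩ := exists_isStableLaw (half_pos hσ) (by linarith)
  have hd : (0 : ℝ) < Module.finrank ℝ V / 2 := half_pos (Nat.cast_pos.2 Module.finrank_pos)
  have hmixture : IsSymbolOfOrder (-(Module.finrank ℝ V + σ))
      fun w : V => gaussianMixture μ (Module.finrank ℝ V / 2) (‖w‖ ^ 2 / 4) := by
    convert IsSymbolOfOrder.gaussianMixture hμ hd using 1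
    ring
  have hmixture' : IsSymbolOfOrder (-(Module.finrank ℝ V + σ)) fun w : V =>
      ‖w‖ ^ 2 * gaussianMixture μ (Module.finrank ℝ V / 2 + 1) (‖w‖ ^ 2 / 4) := by
    convert IsSymbolOfOrder.norm_sq.mul (IsSymbolOfOrder.gaussianMixture hμ (add_pos hd one_pos))
      using 1
    ring
  rw [funext hμ.cosTransform_norm_rpow_mul_exp_neg_norm_rpow]
  exact ((hmixture.const_mul _).sub (hmixture'.const_mul _)).const_mul _

lemma exists_le_cosTransform_exp_neg_norm_rpow (hσ : 0 < σ) (hσ2 : σ < 2) :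
    ∃ c > 0, ∀ w : V, c * (1 + ‖w‖ ^ 2) ^ (-(Module.finrank ℝ V + σ) / 2) ≤
      cosTransform (fun ξ : V => exp (-‖ξ‖ ^ σ)) w := by
  obtain ⟨μ, hμ⟩ := exists_isStableLaw (half_pos hσ) (by linarith)
  have hd : (0 : ℝ) < Module.finrank ℝ V / 2 := half_pos (Nat.cast_pos.2 Module.finrank_pos)
  obtain ⟨c, hc, hle⟩ := hμ.exists_le_gaussianMixture (E := V) (by linarith) hd
  refine ⟨π ^ (Module.finrank ℝ V / 2 : ℝ) * c, by positivity, fun w => ?_⟩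
  rw [hμ.cosTransform_exp_neg_norm_rpow, mul_assoc, neg_div, add_div]
  gcongr
  exact hle w

end Nontrivial

end CosTransform

section Profile

variable {n : ℕ} [NeZero n] {σ : ℝ}

lemma Psi_eq_mul_cosTransform (hσ : 0 < σ) (w : Eu n) :
    Psi n σ w = (2 * π) ^ (-(n : ℝ)) * cosTransform (fun ξ : Eu n => exp (-‖ξ‖ ^ σ)) w := by
  have hint := integrable_exp_neg_mul_norm_rpow (V := Eu n) hσ one_pos
  simp only [one_mul] at hint
  rw [Psi, re_integral_mul_cexp_eq_cosTransform hint]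

lemma LPsi_eq_mul_cosTransform (hσ : 0 < σ) (w : Eu n) :
    LPsi n σ w =
      (2 * π) ^ (-(n : ℝ)) * cosTransform (fun ξ : Eu n => ‖ξ‖ ^ σ * exp (-‖ξ‖ ^ σ)) w := by
  have hint := integrable_norm_rpow_mul_exp_neg_mul_norm_rpow (V := Eu n)
    (by linarith [(Module.finrank ℝ (Eu n)).cast_nonneg (α := ℝ)]) hσ one_pos
  simp only [one_mul] at hint
  rw [LPsi, re_integral_mul_cexp_eq_cosTransform hint]

lemma isSymbolOfOrder_Psi (hσ : 0 < σ) (hσ2 : σ ≤ 2) :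
    IsSymbolOfOrder (-((n : ℝ) + σ)) (Psi n σ) := by
  rw [funext (Psi_eq_mul_cosTransform hσ)]
  simpa only [finrank_euclideanSpace_fin] using
    (isSymbolOfOrder_cosTransform_exp_neg_norm_rpow (Eu n) hσ hσ2).const_mul _

lemma isSymbolOfOrder_LPsi (hσ : 0 < σ) (hσ2 : σ ≤ 2) :
    IsSymbolOfOrder (-((n : ℝ) + σ)) (LPsi n σ) := by
  rw [funext (LPsi_eq_mul_cosTransform hσ)]
  simpa only [finrank_euclideanSpace_fin] using
    (isSymbolOfOrder_cosTransform_norm_rpow_mul_exp_neg_norm_rpow (Eu n) hσ hσ2).const_mul _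

lemma exists_le_Psi (hσ : 0 < σ) (hσ2 : σ < 2) :
    ∃ c > 0, ∀ w : Eu n, c * (1 + ‖w‖ ^ 2) ^ (-((n : ℝ) + σ) / 2) ≤ Psi n σ w := by
  obtain ⟨c, hc, hle⟩ := exists_le_cosTransform_exp_neg_norm_rpow (Eu n) hσ hσ2
  simp only [finrank_euclideanSpace_fin] at hle
  refine ⟨(2 * π) ^ (-(n : ℝ)) * c, by positivity, fun w => ?_⟩
  rw [Psi_eq_mul_cosTransform hσ, mul_assoc]
  gcongr
  exact hle w

end Profile

/-- Sharp bounds for the isotropic profile `Ψ_n`, its fractional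
derivative `LΨ_n`, and their gradients. -/
theorem stmt15 (n : ℕ) (hn : 1 ≤ n) (σ : ℝ) (hσ0 : 0 < σ) (hσ2 : σ < 2) :
    ∃ c1 > (0 : ℝ), ∃ c2 > (0 : ℝ), ∃ c > (0 : ℝ), ∀ w : Eu n,
      c1 * (1 + ‖w‖ ^ 2) ^ (-((n : ℝ) + σ) / 2) ≤ Psi n σ w ∧
      Psi n σ w ≤ c2 * (1 + ‖w‖ ^ 2) ^ (-((n : ℝ) + σ) / 2) ∧
      |LPsi n σ w| ≤ c * (1 + ‖w‖ ^ 2) ^ (-((n : ℝ) + σ) / 2) ∧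
      ‖fderiv ℝ (Psi n σ) w‖ ≤ c * (1 + ‖w‖ ^ 2) ^ (-((n : ℝ) + σ + 1) / 2) ∧
      ‖fderiv ℝ (LPsi n σ) w‖ ≤ c * (1 + ‖w‖ ^ 2) ^ (-((n : ℝ) + σ + 1) / 2) := by
  have : NeZero n := ⟨by omega⟩
  obtain ⟨c₁, hc₁, hlower⟩ := exists_le_Psi (n := n) hσ0 hσ2
  obtain ⟨C, hC, hΨ, hLΨ⟩ := ((eventually_gt_atTop 0).and
    ((isSymbolOfOrder_Psi (n := n) hσ0 hσ2.le).eventually_bound.and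
      (isSymbolOfOrder_LPsi (n := n) hσ0 hσ2.le).eventually_bound)).exists
  have hexponent : -((n : ℝ) + σ + 1) / 2 = (-((n : ℝ) + σ) - 1) / 2 := by ring
  rw [hexponent]
  exact ⟨c₁, hc₁, C, hC, C, hC, fun w => ⟨hlower w, (le_abs_self _).trans (hΨ w).1, (hLΨ w).1,
    (hΨ w).2, (hLΨ w).2⟩⟩
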